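/- Let y ∈ A_ω, i.e. y = ∑ᵢ ω i • xᵢ for some family x : ι → H with xᵢ ∈ Mᵢ^⊥ for all i and ∑ᵢ ω i ‖xᵢ‖² < ∞. Then there exists a constant C > 0 (depending on y and ω) such that for every integer k ≥ 1, ‖T_ω^k y − P_M y‖ ≤ C / √k. -/

import Mathlib

open RealInnerProductSpace

/-!
The operator `T = ∑ ω i P_{M i}` satisfies `0 ≤ T ≤ 1`, and `1 - T = ∑ ω i P_{(M i)ᗮ}`. For
`y = ∑ ω i x i` with `x i ∈ (M i)ᗮ` and `S = ∑ ω i ‖x i‖²`, termwise AM-GM gives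
`2 Re ⟪z, y⟫ ≤ S + Re ⟪z, (1 - T) z⟫` for every `z`. Testing this with
`z = y + T y + ⋯ + T ^ (n - 1) y`, for which `(1 - T) z = y - T ^ n y`, bounds the sum of the
`2 n` numbers `Re ⟪T ^ j y, y⟫`, `j < 2 n`, by `S`. Since `0 ≤ T ≤ 1`, these decrease in `j`, and
`Re ⟪T ^ (2 n) y, y⟫ = ‖T ^ n y‖²`, so `2 n ‖T ^ n y‖² ≤ S`. Finally `P_M y = 0`.
-/

open RCLike (re)
open scoped InnerProductSpace ComplexOrder

theorem le_sqrt_div_sqrt_of_mul_sq_le {a b c : ℝ} (hb : 0 < b) (h : b * a ^ 2 ≤ c) :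
    a ≤ √c / √b := by
  rw [← Real.sqrt_div' c hb.le]
  exact Real.le_sqrt_of_sq_le ((le_div_iff₀' hb).2 h)

theorem summable_smul_of_summable_mul_norm_sq {𝕜 E ι : Type*} [RCLike 𝕜] [NormedAddCommGroup E]
    [NormedSpace 𝕜 E] [CompleteSpace E] {ω : ι → ℝ} (hω : ∀ i, 0 ≤ ω i) (hωsum : Summable ω)
    {x : ι → E} (hx : Summable fun i => ω i * ‖x i‖ ^ 2) :
    Summable fun i => (ω i : 𝕜) • x i := by
  refine .of_norm_bounded (hωsum.add hx) fun i => ?_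
  have h_norm_le : ‖x i‖ ≤ 1 + ‖x i‖ ^ 2 := by nlinarith [sq_nonneg (‖x i‖ - 1)]
  calc ‖(ω i : 𝕜) • x i‖ = ω i * ‖x i‖ := by rw [norm_smul, RCLike.norm_of_nonneg (hω i)]
    _ ≤ ω i * (1 + ‖x i‖ ^ 2) := mul_le_mul_of_nonneg_left h_norm_le (hω i)
    _ = ω i + ω i * ‖x i‖ ^ 2 := by ring

theorem tsum_smul_mem_orthogonal_iInf {𝕜 E ι : Type*} [RCLike 𝕜] [NormedAddCommGroup E]
    [InnerProductSpace 𝕜 E] {M : ι → Submodule 𝕜 E} {x : ι → E} (hx : ∀ i, x i ∈ (M i)ᗮ)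
    (c : ι → 𝕜) : ∑' i, c i • x i ∈ (⨅ i, M i)ᗮ :=
  tsum_mem (Submodule.isClosed_orthogonal _) fun i =>
    Submodule.smul_mem _ (c i) (Submodule.orthogonal_le (iInf_le M i) (hx i))

theorem two_mul_re_inner_le_of_mem {𝕜 E : Type*} [RCLike 𝕜] [NormedAddCommGroup E]
    [InnerProductSpace 𝕜 E] {K : Submodule 𝕜 E} [K.HasOrthogonalProjection] {x : E} (hx : x ∈ K)
    (z : E) : 2 * re ⟪z, x⟫_𝕜 ≤ ‖x‖ ^ 2 + re ⟪z, K.starProjection z⟫_𝕜 := by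
  have h_inner : ⟪z, x⟫_𝕜 = ⟪K.starProjection z, x⟫_𝕜 := by
    rw [Submodule.inner_starProjection_left_eq_right, Submodule.starProjection_eq_self_iff.2 hx]
  have h_sq : re ⟪z, K.starProjection z⟫_𝕜 = ‖K.starProjection z‖ ^ 2 := by
    rw [inner_re_symm]
    exact K.re_inner_starProjection_eq_normSq z
  rw [h_inner, h_sq]
  linarith [norm_sub_sq (𝕜 := 𝕜) (K.starProjection z) x, sq_nonneg ‖K.starProjection z - x‖]

section PositiveContraction

variable {𝕜 E : Type*} [RCLike 𝕜] [NormedAddCommGroup E] [InnerProductSpace 𝕜 E] {T : E →L[𝕜] E}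

theorem re_inner_apply_le_norm_sq_of_le_one (hT : T ≤ 1) (w : E) : re ⟪T w, w⟫_𝕜 ≤ ‖w‖ ^ 2 := by
  have h : 0 ≤ re ⟪(1 - T) w, w⟫_𝕜 := ((T.le_def 1).1 hT).re_inner_nonneg_left w
  simpa only [sub_apply, one_apply_eq_self, inner_sub_left, map_sub, inner_self_eq_norm_sq,
    sub_nonneg] using h

theorem norm_apply_sq_le_re_inner_of_nonneg_of_le_one (hT₀ : 0 ≤ T) (hT₁ : T ≤ 1) (w : E) :
    ‖T w‖ ^ 2 ≤ re ⟪T w, w⟫_𝕜 := by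
  have hT : T.IsPositive := T.nonneg_iff_isPositive.1 hT₀
  have h_symm : re ⟪T (T w), w⟫_𝕜 = ‖T w‖ ^ 2 := by
    rw [hT.inner_left_eq_inner_right, inner_self_eq_norm_sq]
  have h_pos : 0 ≤ re ⟪T (w - T w), w - T w⟫_𝕜 := hT.re_inner_nonneg_left _
  have h_expand : re ⟪T (w - T w), w - T w⟫_𝕜 =
      re ⟪T w, w⟫_𝕜 - 2 * ‖T w‖ ^ 2 + re ⟪T (T w), T w⟫_𝕜 := by
    simp only [map_sub, inner_sub_left, inner_sub_right, h_symm, inner_self_eq_norm_sq]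
    ring
  linarith [re_inner_apply_le_norm_sq_of_le_one hT₁ (T w)]

theorem inner_pow_add_apply_self (hT : T.IsSymmetric) (m n : ℕ) (y : E) :
    ⟪(T ^ (m + n)) y, y⟫_𝕜 = ⟪(T ^ m) y, (T ^ n) y⟫_𝕜 := by
  have h := hT.pow n ((T ^ m) y) y
  rw [← ContinuousLinearMap.toLinearMap_pow] at h
  rw [add_comm, pow_add]
  exact h

theorem antitone_re_inner_pow_apply_self (hT₀ : 0 ≤ T) (hT₁ : T ≤ 1) (y : E) :
    Antitone fun j : ℕ => re ⟪(T ^ j) y, y⟫_𝕜 := by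
  have hT : T.IsSymmetric := (T.nonneg_iff_isPositive.1 hT₀).isSymmetric
  refine antitone_nat_of_succ_le fun j => ?_
  obtain ⟨m, rfl | rfl⟩ := j.even_or_odd'
  · have h := re_inner_apply_le_norm_sq_of_le_one hT₁ ((T ^ m) y)
    rw [show 2 * m + 1 = m + 1 + m by ring, two_mul, inner_pow_add_apply_self hT,
      inner_pow_add_apply_self hT, inner_self_eq_norm_sq, pow_succ']
    exact h
  · have h := norm_apply_sq_le_re_inner_of_nonneg_of_le_one hT₀ hT₁ ((T ^ m) y)
    rw [show 2 * m + 1 + 1 = m + 1 + (m + 1) by ring, show 2 * m + 1 = m + 1 + m by ring,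
      inner_pow_add_apply_self hT, inner_pow_add_apply_self hT, inner_self_eq_norm_sq,
      pow_succ' T m]
    exact h

theorem sum_re_inner_pow_apply_self (hT : T.IsSymmetric) (n : ℕ) (y : E) :
    ∑ j ∈ Finset.range (2 * n), re ⟪(T ^ j) y, y⟫_𝕜 =
      re ⟪(∑ j ∈ Finset.range n, T ^ j) y, y + (T ^ n) y⟫_𝕜 := by
  rw [two_mul, Finset.sum_range_add]
  simp only [add_comm n, inner_pow_add_apply_self hT _ n, sum_apply, sum_inner,
    inner_add_right, map_sum, map_add]

/-- The hypothesis on `y` is the variational form of `y = (1 - T) ^ (1/2) v` with `‖v‖² ≤ S`. -/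
theorem two_mul_norm_pow_apply_sq_le (hT₀ : 0 ≤ T) (hT₁ : T ≤ 1) {y : E} {S : ℝ}
    (hy : ∀ z, 2 * re ⟪z, y⟫_𝕜 ≤ S + re ⟪z, (1 - T) z⟫_𝕜) (n : ℕ) :
    2 * n * ‖(T ^ n) y‖ ^ 2 ≤ S := by
  have hT : T.IsSymmetric := (T.nonneg_iff_isPositive.1 hT₀).isSymmetric
  set s : E := (∑ j ∈ Finset.range n, T ^ j) y with hs
  have h_telescope : (1 - T) s = y - (T ^ n) y := DFunLike.congr_fun (mul_neg_geom_sum T n) y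
  have h_last : re ⟪(T ^ (2 * n)) y, y⟫_𝕜 = ‖(T ^ n) y‖ ^ 2 := by
    rw [two_mul, inner_pow_add_apply_self hT, inner_self_eq_norm_sq]
  calc 2 * n * ‖(T ^ n) y‖ ^ 2
      = ∑ _j ∈ Finset.range (2 * n), ‖(T ^ n) y‖ ^ 2 := by simp
    _ ≤ ∑ j ∈ Finset.range (2 * n), re ⟪(T ^ j) y, y⟫_𝕜 := by
        rw [← h_last]
        exact Finset.sum_le_sum fun j hj =>
          antitone_re_inner_pow_apply_self hT₀ hT₁ y (Finset.mem_range.1 hj).le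
    _ = 2 * re ⟪s, y⟫_𝕜 - re ⟪s, (1 - T) s⟫_𝕜 := by
        rw [sum_re_inner_pow_apply_self hT, ← hs, h_telescope]
        simp only [inner_add_right, inner_sub_right, map_add, map_sub]
        ring
    _ ≤ S := by linarith [hy s]

theorem isClosed_setOf_isPositive : IsClosed {T : E →L[𝕜] E | T.IsPositive} := by
  simp only [ContinuousLinearMap.isPositive_def, LinearMap.IsSymmetric,
    ContinuousLinearMap.reApplyInnerSelf_apply, ContinuousLinearMap.coe_coe,
    Set.ofPred_and, Set.ofPred_forall]
  refine .inter (isClosed_iInter fun z => isClosed_iInter fun w => ?_)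
    (isClosed_iInter fun z => ?_)
  · exact isClosed_eq (by fun_prop) (by fun_prop)
  · exact isClosed_le (by fun_prop) (by fun_prop)

end PositiveContraction

section SimultaneousProjection

variable {𝕜 H ι : Type*} [RCLike 𝕜] [NormedAddCommGroup H] [InnerProductSpace 𝕜 H]
  {ω : ι → ℝ} {M : ι → Submodule 𝕜 H} [∀ i, (M i).HasOrthogonalProjection]

/-- The simultaneous projection operator `T_ω = ∑ᵢ ω i P_{M i}`. The series is taken in operator
norm, so that it is a continuous linear map; it is `0` by convention if the series diverges. -/
noncomputable def simultaneousProjection (ω : ι → ℝ) (M : ι → Submodule 𝕜 H)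
    [∀ i, (M i).HasOrthogonalProjection] : H →L[𝕜] H :=
  ∑' i, (ω i : 𝕜) • (M i).starProjection

variable [CompleteSpace H]

theorem hasSum_simultaneousProjection (hω : Summable ω) :
    HasSum (fun i => (ω i : 𝕜) • (M i).starProjection) (simultaneousProjection ω M) := by
  refine (Summable.of_norm_bounded hω.norm fun i => ?_).hasSum
  rw [norm_smul, RCLike.norm_ofReal]
  exact mul_le_of_le_one_right (abs_nonneg _) (M i).starProjection_norm_le

theorem hasSum_simultaneousProjection_apply (hω : Summable ω) (z : H) :
    HasSum (fun i => (ω i : 𝕜) • (M i).starProjection z) (simultaneousProjection ω M z) :=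
  (hasSum_simultaneousProjection hω).mapL (ContinuousLinearMap.apply 𝕜 H z)

theorem simultaneousProjection_nonneg (hω : ∀ i, 0 ≤ ω i) (hωsum : Summable ω) :
    0 ≤ simultaneousProjection ω M :=
  (ContinuousLinearMap.nonneg_iff_isPositive _).2 <|
    isClosed_setOf_isPositive.mem_of_tendsto (hasSum_simultaneousProjection hωsum) <|
      .of_forall fun s => ContinuousLinearMap.isPositive_sum s fun i _ =>
        ContinuousLinearMap.IsPositive.smul_of_nonneg
          (.of_isStarProjection isStarProjection_starProjection) (RCLike.ofReal_nonneg.2 (hω i))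

theorem one_sub_simultaneousProjection (hω : HasSum ω 1) :
    1 - simultaneousProjection ω M = simultaneousProjection ω fun i => (M i)ᗮ := by
  have h_one : HasSum (fun i => (ω i : 𝕜) • (1 : H →L[𝕜] H)) 1 := by
    simpa using (hω.mapL (RCLike.ofRealCLM (K := 𝕜))).smul_const (1 : H →L[𝕜] H)
  refine (h_one.sub (hasSum_simultaneousProjection hω.summable)).unique ?_
  simpa only [Submodule.starProjection_orthogonal', smul_sub] using
    hasSum_simultaneousProjection (M := fun i => (M i)ᗮ) hω.summable

theorem simultaneousProjection_le_one (hω : ∀ i, 0 ≤ ω i) (hωsum : HasSum ω 1) :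
    simultaneousProjection ω M ≤ 1 := by
  rw [ContinuousLinearMap.le_def, one_sub_simultaneousProjection hωsum,
    ← ContinuousLinearMap.nonneg_iff_isPositive]
  exact simultaneousProjection_nonneg hω hωsum.summable

theorem two_mul_re_inner_tsum_le (hω : ∀ i, 0 ≤ ω i) (hωsum : Summable ω)
    {x : ι → H} (hx : ∀ i, x i ∈ M i) (hxsum : Summable fun i => ω i * ‖x i‖ ^ 2) (z : H) :
    2 * re ⟪z, ∑' i, (ω i : 𝕜) • x i⟫_𝕜 ≤
      ∑' i, ω i * ‖x i‖ ^ 2 + re ⟪z, simultaneousProjection ω M z⟫_𝕜 := by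
  have h_re_inner {v : ι → H} {w : H} (h : HasSum (fun i => (ω i : 𝕜) • v i) w) :
      HasSum (fun i => ω i * re ⟪z, v i⟫_𝕜) (re ⟪z, w⟫_𝕜) := by
    simpa [inner_smul_right] using (h.mapL (innerSL 𝕜 z)).mapL RCLike.reCLM
  have h_left := h_re_inner (summable_smul_of_summable_mul_norm_sq hω hωsum hxsum).hasSum
  have h_right := h_re_inner (hasSum_simultaneousProjection_apply (M := M) hωsum z)
  refine hasSum_le (fun i => ?_) (h_left.mul_left 2) (hxsum.hasSum.add h_right)
  linarith [mul_le_mul_of_nonneg_left (two_mul_re_inner_le_of_mem (hx i) z) (hω i)]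

theorem two_mul_norm_simultaneousProjection_pow_apply_sq_le (hω : ∀ i, 0 ≤ ω i)
    (hωsum : HasSum ω 1) {x : ι → H} (hx : ∀ i, x i ∈ (M i)ᗮ)
    (hxsum : Summable fun i => ω i * ‖x i‖ ^ 2) (n : ℕ) :
    2 * n * ‖(simultaneousProjection ω M ^ n) (∑' i, (ω i : 𝕜) • x i)‖ ^ 2 ≤
      ∑' i, ω i * ‖x i‖ ^ 2 := by
  refine two_mul_norm_pow_apply_sq_le (simultaneousProjection_nonneg hω hωsum.summable)
    (simultaneousProjection_le_one hω hωsum) (fun z => ?_) n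
  rw [one_sub_simultaneousProjection hωsum]
  exact two_mul_re_inner_tsum_le hω hωsum.summable hx hxsum z

end SimultaneousProjection

theorem stmt_19_general {𝕜 H ι : Type*} [RCLike 𝕜] [NormedAddCommGroup H] [InnerProductSpace 𝕜 H]
    [CompleteSpace H] (ω : ι → ℝ) (hω : ∀ i, 0 ≤ ω i) (hωsum : HasSum ω 1)
    (M : ι → Submodule 𝕜 H) [∀ i, (M i).HasOrthogonalProjection]
    [(⨅ i, M i).HasOrthogonalProjection] (y : H)
    (hy : ∃ x : ι → H, (∀ i, x i ∈ (M i)ᗮ) ∧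
      (Summable fun i => ω i * ‖x i‖ ^ 2) ∧ y = ∑' i, (ω i : 𝕜) • x i) :
    ∃ C : ℝ, 0 < C ∧ ∀ k : ℕ, 1 ≤ k →
      ‖(fun z : H => ∑' i, (ω i : 𝕜) • ((M i).orthogonalProjectionOnto z : H))^[k] y -
          ((⨅ i, M i).orthogonalProjectionOnto y : H)‖ ≤ C / √k := by
  obtain ⟨x, hx, hxsum, rfl⟩ := hy
  refine ⟨√((∑' i, ω i * ‖x i‖ ^ 2) / 2) + 1, by positivity, fun k hk => ?_⟩
  have hT : (fun z : H => ∑' i, (ω i : 𝕜) • ((M i).orthogonalProjectionOnto z : H)) =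
      simultaneousProjection ω M :=
    funext fun z => (hasSum_simultaneousProjection_apply hωsum.summable z).tsum_eq
  rw [Submodule.orthogonalProjectionOnto_apply_of_mem_orthogonal
    (tsum_smul_mem_orthogonal_iInf hx _), Submodule.coe_zero, sub_zero, hT,
    ← FunLike.coe_pow_eq_iterate]
  have h := two_mul_norm_simultaneousProjection_pow_apply_sq_le hω hωsum hx hxsum k
  calc _ ≤ √((∑' i, ω i * ‖x i‖ ^ 2) / 2) / √k :=
        le_sqrt_div_sqrt_of_mul_sq_le (Nat.cast_pos.2 hk) (by linarith)
    _ ≤ _ := by gcongr; linarith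

/-- For every starting point `y ∈ A_ω` there is `C > 0` such that
`‖T_ω^k y − P_M y‖ ≤ C / √k` for all `k ≥ 1` (polynomial rate of convergence). -/
theorem stmt_19 {H : Type*} [NormedAddCommGroup H] [InnerProductSpace ℝ H] [CompleteSpace H]
    {ι : Type*} [Countable ι] [Nonempty ι]
    (ω : ι → ℝ) (hω : ∀ i, 0 < ω i) (hωsum : HasSum ω 1)
    (M : ι → Submodule ℝ H) [∀ i, CompleteSpace (M i)]
    [CompleteSpace ↥(⨅ i, M i : Submodule ℝ H)]
    (hMnt : ∀ i, M i ≠ ⊥)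
    (y : H)
    (hy : ∃ x : ι → H, (∀ i, x i ∈ (M i)ᗮ) ∧
      (Summable fun i => ω i * ‖x i‖ ^ 2) ∧ y = ∑' i, ω i • x i) :
    ∃ C : ℝ, 0 < C ∧ ∀ k : ℕ, 1 ≤ k →
      ‖(fun z : H => ∑' i, ω i • ((Submodule.orthogonalProjectionOnto (M i) z : H)))^[k] y -
          (Submodule.orthogonalProjectionOnto (⨅ i, M i : Submodule ℝ H) y : H)‖ ≤
        C / Real.sqrt k := by
  exact stmt_19_general ω (fun i => (hω i).le) hωsum M y hy
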